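/- The maps z, z†, E, F, K̂, K̂⁻¹ form a ∗-representation of the cross product ∗-algebra U_q(su_{1,1})⋉O(U_q) on D: ⟨zξ, η⟩ = ⟨ξ, z†η⟩, ⟨Eξ, η⟩ = −⟨ξ, Fη⟩, ⟨K̂ξ, η⟩ = ⟨ξ, K̂η⟩ for all ξ, η ∈ D, and on D the relations hold: z†z − q²zz† = (1−q²)·id; K̂K̂⁻¹ = K̂⁻¹K̂ = id; K̂E = qEK̂; K̂F = q⁻¹FK̂; EF − FE = λ⁻¹(K̂² − K̂⁻²); zK̂ = q⁻¹K̂z; zE = q⁻¹Ez − q^{1/2}K̂⁻¹z²; zF = q⁻¹Fz + q^{−1/2}K̂⁻¹; z†K̂ = qK̂z†; z†E = qEz† + q^{1/2}K̂⁻¹; z†F = qFz† − q^{−1/2}K̂⁻¹(z†)². -/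

import Mathlib

noncomputable section

/-- The inner product `⟨η, ζ⟩ = Σᵢ ⟨η(i), ζ(i)⟩` on the space of finitely supported
functions `ι →₀ H` with values in a complex inner product space `H`. -/
def finsuppInner {ι H : Type*} [NormedAddCommGroup H] [InnerProductSpace ℂ H]
    (η ζ : ι →₀ H) : ℂ :=
  η.sum fun i x => (inner ℂ x (ζ i) : ℂ)

namespace Stmt17

variable {K : Type*} [NormedAddCommGroup K] [InnerProductSpace ℂ K] [CompleteSpace K]

/-- `α_n(T) = (1 + q^{2n}T²)^{1/2}`, the positive square root given by the continuous
functional calculus. -/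
def alpha (q : ℝ) (T : K →L[ℂ] K) (n : ℤ) : K →L[ℂ] K :=
  CFC.sqrt (1 + ((q ^ (2 * n) : ℝ) : ℂ) • (T * T))

/-- `z η_{nk} = α_{n+1}(A₁) η_{n+1,k}`. -/
def zOp (q : ℝ) (A₁ : K →L[ℂ] K) : Module.End ℂ (ℤ × ℤ →₀ K) :=
  Finsupp.lsum ℂ fun p =>
    (Finsupp.lsingle (p.1 + 1, p.2)).comp (alpha q A₁ (p.1 + 1) : K →ₗ[ℂ] K)

/-- `z† η_{nk} = α_n(A₁) η_{n-1,k}`. -/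
def zdOp (q : ℝ) (A₁ : K →L[ℂ] K) : Module.End ℂ (ℤ × ℤ →₀ K) :=
  Finsupp.lsum ℂ fun p =>
    (Finsupp.lsingle (p.1 - 1, p.2)).comp (alpha q A₁ p.1 : K →ₗ[ℂ] K)

/-- `K̂ η_{nk} = q^{n-k} H₁ η_{nk}`. -/
def KOp (q : ℝ) (H₁ : K →L[ℂ] K) : Module.End ℂ (ℤ × ℤ →₀ K) :=
  Finsupp.lsum ℂ fun p => (Finsupp.lsingle p).comp
    (((q : ℂ) ^ (p.1 - p.2)) • (H₁ : K →ₗ[ℂ] K))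

/-- `K̂⁻¹ η_{nk} = q^{-(n-k)} H₁⁻¹ η_{nk}`. -/
def KinvOp (q : ℝ) (H₁ : K →L[ℂ] K) [Invertible H₁] : Module.End ℂ (ℤ × ℤ →₀ K) :=
  Finsupp.lsum ℂ fun p => (Finsupp.lsingle p).comp
    (((q : ℂ) ^ (-(p.1 - p.2))) • ((⅟H₁ : K →L[ℂ] K) : K →ₗ[ℂ] K))

/-- `F η_{nk} = λ⁻¹q^{n-k-1/2} H₁ α_{k+1}(A₂) η_{n,k+1}
  + λ⁻¹q^{-(n-k)+1/2} H₁⁻¹ α_n(A₁) η_{n-1,k}`, where `λ = q - q⁻¹` and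
`q^{n-k-1/2} = (√q)^{2(n-k)-1}`. -/
def FOp (q : ℝ) (A₁ A₂ H₁ : K →L[ℂ] K) [Invertible H₁] : Module.End ℂ (ℤ × ℤ →₀ K) :=
  Finsupp.lsum ℂ fun p =>
    (Finsupp.lsingle (p.1, p.2 + 1)).comp
      ((((q : ℂ) - (q : ℂ)⁻¹)⁻¹ * (Real.sqrt q : ℂ) ^ (2 * (p.1 - p.2) - 1)) •
        ((H₁ * alpha q A₂ (p.2 + 1) : K →L[ℂ] K) : K →ₗ[ℂ] K))
    + (Finsupp.lsingle (p.1 - 1, p.2)).comp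
      ((((q : ℂ) - (q : ℂ)⁻¹)⁻¹ * (Real.sqrt q : ℂ) ^ (1 - 2 * (p.1 - p.2))) •
        ((⅟H₁ * alpha q A₁ p.1 : K →L[ℂ] K) : K →ₗ[ℂ] K))

/-- `E η_{nk} = -λ⁻¹q^{n-k+1/2} H₁ α_k(A₂) η_{n,k-1}
  - λ⁻¹q^{-(n-k)-1/2} H₁⁻¹ α_{n+1}(A₁) η_{n+1,k}`. -/
def EOp (q : ℝ) (A₁ A₂ H₁ : K →L[ℂ] K) [Invertible H₁] : Module.End ℂ (ℤ × ℤ →₀ K) :=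
  Finsupp.lsum ℂ fun p =>
    -((Finsupp.lsingle (p.1, p.2 - 1)).comp
      ((((q : ℂ) - (q : ℂ)⁻¹)⁻¹ * (Real.sqrt q : ℂ) ^ (2 * (p.1 - p.2) + 1)) •
        ((H₁ * alpha q A₂ p.2 : K →L[ℂ] K) : K →ₗ[ℂ] K)))
    - (Finsupp.lsingle (p.1 + 1, p.2)).comp
      ((((q : ℂ) - (q : ℂ)⁻¹)⁻¹ * (Real.sqrt q : ℂ) ^ (-(2 * (p.1 - p.2)) - 1)) •
        ((⅟H₁ * alpha q A₁ (p.1 + 1) : K →L[ℂ] K) : K →ₗ[ℂ] K))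

end Stmt17

/-!
Let `w η_{nk} = α_{k+1}(A₂) η_{n,k+1}` and `w† η_{nk} = α_k(A₂) η_{n,k-1}` be the analogues of
`z` and `z†` in the second index. Then `(z, z†)` and `(w, w†)` are commuting `q`-oscillators,
homogeneous for conjugation by `K̂`, and with `s = √q`
`F = λ⁻¹(s K̂w + s⁻¹ K̂⁻¹z†)` and `E = -λ⁻¹(s⁻¹ K̂w† + s K̂⁻¹z)`.
All relations involving `E` and `F` follow from these two formulas by pure algebra: in `EF - FE`
the mixed terms cancel, and the oscillator relations turn the other two into `K̂²` and `K̂⁻²`.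
-/

namespace Stmt17

section Algebra

variable {𝕜 R : Type*} [Field 𝕜] [Ring R] [Algebra 𝕜 R]

/-- `a` and `b` commute up to the scalar factor `c`. -/
def QCommute (c : 𝕜) (a b : R) : Prop :=
  a * b = c • (b * a)

namespace QCommute

variable {c d : 𝕜} {a b b' k k' : R}

theorem of_commute (h : Commute a b) : QCommute (1 : 𝕜) a b := by
  rw [QCommute, one_smul, h.eq]

theorem symm (h : QCommute c a b) (hc : c ≠ 0) : QCommute c⁻¹ b a := by
  rw [QCommute, h, inv_smul_smul₀ hc]

theorem add_right (h : QCommute c a b) (h' : QCommute c a b') : QCommute c a (b + b') := by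
  rw [QCommute, mul_add, add_mul, smul_add, h, h']

theorem smul_right (h : QCommute c a b) (r : 𝕜) : QCommute c a (r • b) := by
  rw [QCommute, mul_smul_comm, smul_mul_assoc, h, smul_comm]

theorem mul_right (h : QCommute c a b) (h' : QCommute d a b') : QCommute (c * d) a (b * b') := by
  rw [QCommute, ← mul_assoc, h, smul_mul_assoc, mul_assoc, h', mul_smul_comm, smul_smul, mul_assoc]

theorem inv_right (h : QCommute c a k) (hc : c ≠ 0) (hk : k * k' = 1) (hk' : k' * k = 1) :
    QCommute c⁻¹ a k' := by
  calc a * k' = c⁻¹ • (k' * (c • (k * a)) * k') := by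
        rw [mul_smul_comm, smul_mul_assoc, inv_smul_smul₀ hc, ← mul_assoc, hk', one_mul]
    _ = c⁻¹ • (k' * a) := by rw [← h, mul_assoc, mul_assoc, hk, mul_one]

theorem mul_mul_mul (h : QCommute c a k') (k b : R) :
    k * a * (k' * b) = c • (k * k' * (a * b)) := by
  rw [mul_assoc, ← mul_assoc a, h, smul_mul_assoc, mul_smul_comm, mul_assoc, mul_assoc]

end QCommute

/-- Two mutually commuting `q`-oscillators `(z, zd)` and `(w, wd)`, together with an invertible
element `k` (of inverse `kinv`) for which `z, wd` have weight `q` and `zd, w` have weight `q⁻¹`. -/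
structure QOscillatorPair (q : 𝕜) (z zd w wd k kinv : R) : Prop where
  zd_mul_z : zd * z - q ^ 2 • (z * zd) = (1 - q ^ 2) • 1
  wd_mul_w : wd * w - q ^ 2 • (w * wd) = (1 - q ^ 2) • 1
  z_w : Commute z w
  z_wd : Commute z wd
  zd_w : Commute zd w
  zd_wd : Commute zd wd
  k_mul_kinv : k * kinv = 1
  kinv_mul_k : kinv * k = 1
  k_z : QCommute q k z
  k_zd : QCommute q⁻¹ k zd
  k_w : QCommute q⁻¹ k w
  k_wd : QCommute q k wd

/-- The element representing the generator `E` in terms of a `QOscillatorPair`; the parameter `s`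
is a square root of `q`. -/
def oscillatorE (q s : 𝕜) (z wd k kinv : R) : R :=
  -(q - q⁻¹)⁻¹ • (s⁻¹ • (k * wd) + s • (kinv * z))

/-- The element representing the generator `F` in terms of a `QOscillatorPair`; the parameter `s`
is a square root of `q`. -/
def oscillatorF (q s : 𝕜) (zd w k kinv : R) : R :=
  (q - q⁻¹)⁻¹ • (s • (k * w) + s⁻¹ • (kinv * zd))

/-- The defining relations of the cross product algebra `U_q(su_{1,1}) ⋉ O(U_q)`, with `s` in the
role of `q^{1/2}` and `zd` in the role of `z̄`. -/
structure CrossProductRelations (q s : 𝕜) (z zd e f k kinv : R) : Prop where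
  zd_mul_z : zd * z - q ^ 2 • (z * zd) = (1 - q ^ 2) • 1
  k_mul_kinv : k * kinv = 1
  kinv_mul_k : kinv * k = 1
  k_mul_e : k * e = q • (e * k)
  k_mul_f : k * f = q⁻¹ • (f * k)
  e_mul_f_sub : e * f - f * e = (q - q⁻¹)⁻¹ • (k * k - kinv * kinv)
  z_mul_k : z * k = q⁻¹ • (k * z)
  z_mul_e : z * e = q⁻¹ • (e * z) - s • (kinv * (z * z))
  z_mul_f : z * f = q⁻¹ • (f * z) + s⁻¹ • kinv
  zd_mul_k : zd * k = q • (k * zd)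
  zd_mul_e : zd * e = q • (e * zd) + s • kinv
  zd_mul_f : zd * f = q • (f * zd) - s⁻¹ • (kinv * (zd * zd))

namespace QOscillatorPair

variable {q s : 𝕜} {z zd w wd k kinv : R}

theorem z_k (h : QOscillatorPair q z zd w wd k kinv) (hq : q ≠ 0) :
    QCommute q⁻¹ z k := h.k_z.symm hq

theorem zd_k (h : QOscillatorPair q z zd w wd k kinv) (hq : q ≠ 0) :
    QCommute q zd k := by simpa using h.k_zd.symm (inv_ne_zero hq)

theorem w_k (h : QOscillatorPair q z zd w wd k kinv) (hq : q ≠ 0) :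
    QCommute q w k := by simpa using h.k_w.symm (inv_ne_zero hq)

theorem wd_k (h : QOscillatorPair q z zd w wd k kinv) (hq : q ≠ 0) :
    QCommute q⁻¹ wd k := h.k_wd.symm hq

theorem z_kinv (h : QOscillatorPair q z zd w wd k kinv) (hq : q ≠ 0) : QCommute q z kinv := by
  simpa using (h.z_k hq).inv_right (inv_ne_zero hq) h.k_mul_kinv h.kinv_mul_k

theorem zd_kinv (h : QOscillatorPair q z zd w wd k kinv) (hq : q ≠ 0) : QCommute q⁻¹ zd kinv :=
  (h.zd_k hq).inv_right hq h.k_mul_kinv h.kinv_mul_k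

theorem w_kinv (h : QOscillatorPair q z zd w wd k kinv) (hq : q ≠ 0) : QCommute q⁻¹ w kinv :=
  (h.w_k hq).inv_right hq h.k_mul_kinv h.kinv_mul_k

theorem wd_kinv (h : QOscillatorPair q z zd w wd k kinv) (hq : q ≠ 0) : QCommute q wd kinv := by
  simpa using (h.wd_k hq).inv_right (inv_ne_zero hq) h.k_mul_kinv h.kinv_mul_k

theorem z_mul_kinv_zd (h : QOscillatorPair q z zd w wd k kinv) (hq : q ≠ 0) :
    z * (kinv * zd) = q⁻¹ • (kinv * zd * z) + (q - q⁻¹) • kinv := by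
  rw [← mul_assoc, h.z_kinv hq, mul_assoc kinv zd, sub_eq_iff_eq_add.mp h.zd_mul_z]
  simp only [mul_add, mul_smul_comm, mul_one, smul_mul_assoc, mul_assoc]
  match_scalars <;> field_simp
  ring

theorem zd_mul_kinv_z (h : QOscillatorPair q z zd w wd k kinv) (hq : q ≠ 0) :
    zd * (kinv * z) = q • (kinv * z * zd) - (q - q⁻¹) • kinv := by
  rw [← mul_assoc, h.zd_kinv hq, smul_mul_assoc, mul_assoc, sub_eq_iff_eq_add.mp h.zd_mul_z]
  simp only [mul_add, mul_smul_comm, mul_one, mul_assoc]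
  match_scalars <;> field_simp
  ring

theorem commute_k_wd_kinv_zd (h : QOscillatorPair q z zd w wd k kinv) (hq : q ≠ 0) :
    Commute (k * wd) (kinv * zd) := by
  rw [Commute, SemiconjBy, (h.wd_kinv hq).mul_mul_mul, (h.zd_k hq).mul_mul_mul, h.k_mul_kinv,
    h.kinv_mul_k, h.zd_wd.eq]

theorem commute_kinv_z_k_w (h : QOscillatorPair q z zd w wd k kinv) (hq : q ≠ 0) :
    Commute (kinv * z) (k * w) := by
  rw [Commute, SemiconjBy, (h.z_k hq).mul_mul_mul, (h.w_kinv hq).mul_mul_mul, h.k_mul_kinv,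
    h.kinv_mul_k, h.z_w.eq]

theorem commutator_k_wd_k_w (h : QOscillatorPair q z zd w wd k kinv) (hq : q ≠ 0) :
    k * wd * (k * w) - k * w * (k * wd) = -(q - q⁻¹) • (k * k) := by
  rw [(h.wd_k hq).mul_mul_mul, (h.w_k hq).mul_mul_mul, sub_eq_iff_eq_add.mp h.wd_mul_w]
  simp only [mul_add, mul_smul_comm, mul_one]
  match_scalars <;> field_simp <;> ring

theorem commutator_kinv_z_kinv_zd (h : QOscillatorPair q z zd w wd k kinv) (hq : q ≠ 0) :
    kinv * z * (kinv * zd) - kinv * zd * (kinv * z) = (q - q⁻¹) • (kinv * kinv) := by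
  rw [(h.z_kinv hq).mul_mul_mul, (h.zd_kinv hq).mul_mul_mul, sub_eq_iff_eq_add.mp h.zd_mul_z]
  simp only [mul_add, mul_smul_comm, mul_one]
  match_scalars <;> field_simp <;> ring

theorem k_oscillatorE (h : QOscillatorPair q z zd w wd k kinv) :
    QCommute q k (oscillatorE q s z wd k kinv) := by
  have k_kwd : QCommute q k (k * wd) := by
    simpa using (QCommute.of_commute (Commute.refl k)).mul_right h.k_wd
  have k_kinvz : QCommute q k (kinv * z) := by
    have k_kinv : Commute k kinv := h.k_mul_kinv.trans h.kinv_mul_k.symm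
    simpa using (QCommute.of_commute k_kinv).mul_right h.k_z
  exact ((k_kwd.smul_right _).add_right (k_kinvz.smul_right _)).smul_right _

theorem k_oscillatorF (h : QOscillatorPair q z zd w wd k kinv) :
    QCommute q⁻¹ k (oscillatorF q s zd w k kinv) := by
  have k_kw : QCommute q⁻¹ k (k * w) := by
    simpa using (QCommute.of_commute (Commute.refl k)).mul_right h.k_w
  have k_kinvzd : QCommute q⁻¹ k (kinv * zd) := by
    have k_kinv : Commute k kinv := h.k_mul_kinv.trans h.kinv_mul_k.symm
    simpa using (QCommute.of_commute k_kinv).mul_right h.k_zd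
  exact ((k_kw.smul_right _).add_right (k_kinvzd.smul_right _)).smul_right _

theorem z_mul_oscillatorE (h : QOscillatorPair q z zd w wd k kinv) (hq : q ≠ 0) (hq2 : q ^ 2 ≠ 1) :
    z * oscillatorE q s z wd k kinv =
      q⁻¹ • (oscillatorE q s z wd k kinv * z) - s • (kinv * (z * z)) := by
  have z_kwd : z * (k * wd) = q⁻¹ • (k * wd * z) := by
    simpa [QCommute] using (h.z_k hq).mul_right (.of_commute h.z_wd)
  have z_kinvz : z * (kinv * z) = q • (kinv * z * z) := by
    simpa [QCommute] using (h.z_kinv hq).mul_right (.of_commute (Commute.refl z))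
  simp only [oscillatorE, mul_smul_comm, smul_mul_assoc, mul_add, add_mul, z_kwd, z_kinvz,
    ← mul_assoc]
  have q_sq_sub_one : q ^ 2 - 1 ≠ 0 := sub_ne_zero.mpr hq2
  match_scalars <;> field_simp
  ring

theorem zd_mul_oscillatorF (h : QOscillatorPair q z zd w wd k kinv) (hq : q ≠ 0) (hq2 : q ^ 2 ≠ 1) :
    zd * oscillatorF q s zd w k kinv =
      q • (oscillatorF q s zd w k kinv * zd) - s⁻¹ • (kinv * (zd * zd)) := by
  have zd_kw : zd * (k * w) = q • (k * w * zd) := by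
    simpa [QCommute] using (h.zd_k hq).mul_right (.of_commute h.zd_w)
  have zd_kinvzd : zd * (kinv * zd) = q⁻¹ • (kinv * zd * zd) := by
    simpa [QCommute] using (h.zd_kinv hq).mul_right (.of_commute (Commute.refl zd))
  simp only [oscillatorF, mul_smul_comm, smul_mul_assoc, mul_add, add_mul, zd_kw, zd_kinvzd,
    ← mul_assoc]
  have q_sq_sub_one : q ^ 2 - 1 ≠ 0 := sub_ne_zero.mpr hq2
  match_scalars <;> field_simp
  ring

theorem z_mul_oscillatorF (h : QOscillatorPair q z zd w wd k kinv) (hq : q ≠ 0) (hq2 : q ^ 2 ≠ 1) :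
    z * oscillatorF q s zd w k kinv = q⁻¹ • (oscillatorF q s zd w k kinv * z) + s⁻¹ • kinv := by
  have z_kw : z * (k * w) = q⁻¹ • (k * w * z) := by
    simpa [QCommute] using (h.z_k hq).mul_right (.of_commute h.z_w)
  simp only [oscillatorF, mul_smul_comm, smul_mul_assoc, mul_add, add_mul, z_kw,
    h.z_mul_kinv_zd hq]
  have q_sq_sub_one : q ^ 2 - 1 ≠ 0 := sub_ne_zero.mpr hq2
  match_scalars <;> field_simp

theorem zd_mul_oscillatorE (h : QOscillatorPair q z zd w wd k kinv) (hq : q ≠ 0) (hq2 : q ^ 2 ≠ 1) :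
    zd * oscillatorE q s z wd k kinv = q • (oscillatorE q s z wd k kinv * zd) + s • kinv := by
  have zd_kwd : zd * (k * wd) = q • (k * wd * zd) := by
    simpa [QCommute] using (h.zd_k hq).mul_right (.of_commute h.zd_wd)
  simp only [oscillatorE, mul_smul_comm, smul_mul_assoc, mul_add, add_mul, zd_kwd,
    h.zd_mul_kinv_z hq]
  have q_sq_sub_one : q ^ 2 - 1 ≠ 0 := sub_ne_zero.mpr hq2
  match_scalars <;> field_simp

theorem oscillatorE_mul_oscillatorF_sub (h : QOscillatorPair q z zd w wd k kinv) (hq : q ≠ 0)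
    (hs : s ≠ 0) :
    oscillatorE q s z wd k kinv * oscillatorF q s zd w k kinv -
        oscillatorF q s zd w k kinv * oscillatorE q s z wd k kinv =
      (q - q⁻¹)⁻¹ • (k * k - kinv * kinv) := by
  simp only [oscillatorE, oscillatorF, mul_smul_comm, smul_mul_assoc, mul_add, add_mul,
    (h.commute_k_wd_kinv_zd hq).eq, (h.commute_kinv_z_k_w hq).eq,
    sub_eq_iff_eq_add.mp (h.commutator_k_wd_k_w hq),
    sub_eq_iff_eq_add.mp (h.commutator_kinv_z_kinv_zd hq)]
  match_scalars <;> field_simp <;> ring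

theorem crossProductRelations (h : QOscillatorPair q z zd w wd k kinv) (hq : q ≠ 0)
    (hq2 : q ^ 2 ≠ 1) (hs : s ≠ 0) :
    CrossProductRelations q s z zd (oscillatorE q s z wd k kinv) (oscillatorF q s zd w k kinv)
      k kinv where
  zd_mul_z := h.zd_mul_z
  k_mul_kinv := h.k_mul_kinv
  kinv_mul_k := h.kinv_mul_k
  k_mul_e := h.k_oscillatorE
  k_mul_f := h.k_oscillatorF
  e_mul_f_sub := h.oscillatorE_mul_oscillatorF_sub hq hs
  z_mul_k := h.z_k hq
  z_mul_e := h.z_mul_oscillatorE hq hq2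
  z_mul_f := h.z_mul_oscillatorF hq hq2
  zd_mul_k := h.zd_k hq
  zd_mul_e := h.zd_mul_oscillatorE hq hq2
  zd_mul_f := h.zd_mul_oscillatorF hq hq2

end QOscillatorPair

end Algebra

section FormalAdjoint

variable {ι H : Type*} [NormedAddCommGroup H] [InnerProductSpace ℂ H]

theorem finsuppInner_zero_left (η : ι →₀ H) : finsuppInner 0 η = 0 :=
  Finsupp.sum_zero_index

theorem finsuppInner_zero_right (ξ : ι →₀ H) : finsuppInner ξ 0 = 0 := by
  simp [finsuppInner]

theorem finsuppInner_add_left (ξ ξ' η : ι →₀ H) :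
    finsuppInner (ξ + ξ') η = finsuppInner ξ η + finsuppInner ξ' η := by
  classical
  exact Finsupp.sum_add_index' (fun _ => inner_zero_left _) fun _ _ _ => inner_add_left _ _ _

theorem finsuppInner_add_right (ξ η η' : ι →₀ H) :
    finsuppInner ξ (η + η') = finsuppInner ξ η + finsuppInner ξ η' := by
  simp only [finsuppInner, Finsupp.add_apply, inner_add_right, Finsupp.sum_add]

theorem finsuppInner_smul_left (c : ℂ) (ξ η : ι →₀ H) :
    finsuppInner (c • ξ) η = starRingEnd ℂ c * finsuppInner ξ η := by
  rw [finsuppInner, Finsupp.sum_smul_index' fun i => inner_zero_left (η i)]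
  simp only [finsuppInner, Finsupp.sum, inner_smul_left, Finset.mul_sum]

theorem finsuppInner_smul_right (c : ℂ) (ξ η : ι →₀ H) :
    finsuppInner ξ (c • η) = c * finsuppInner ξ η := by
  simp only [finsuppInner, Finsupp.smul_apply, inner_smul_right, Finsupp.sum, Finset.mul_sum]

theorem finsuppInner_neg_right (ξ η : ι →₀ H) : finsuppInner ξ (-η) = -finsuppInner ξ η := by
  simpa using finsuppInner_smul_right (-1) ξ η

open Classical in
theorem finsuppInner_single (i j : ι) (x y : H) :
    finsuppInner (Finsupp.single i x) (Finsupp.single j y) =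
      if j = i then inner ℂ x y else 0 := by
  rw [finsuppInner, Finsupp.sum_single_index (by simp), Finsupp.single_apply]
  split_ifs <;> simp

/-- `T` is a formal adjoint of `S` with respect to `finsuppInner`. -/
def IsFormalAdjoint (S T : Module.End ℂ (ι →₀ H)) : Prop :=
  ∀ ξ η, finsuppInner (S ξ) η = finsuppInner ξ (T η)

namespace IsFormalAdjoint

variable {S S' T T' : Module.End ℂ (ι →₀ H)}

theorem of_single
    (h : ∀ i j x y, finsuppInner (S (Finsupp.single i x)) (Finsupp.single j y) =
      finsuppInner (Finsupp.single i x) (T (Finsupp.single j y))) :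
    IsFormalAdjoint S T := by
  intro ξ η
  induction ξ using Finsupp.induction_linear with
  | zero => rw [map_zero, finsuppInner_zero_left, finsuppInner_zero_left]
  | add ξ ξ' hξ hξ' => rw [map_add, finsuppInner_add_left, finsuppInner_add_left, hξ, hξ']
  | single i x =>
    induction η using Finsupp.induction_linear with
    | zero => rw [map_zero, finsuppInner_zero_right, finsuppInner_zero_right]
    | add η η' hη hη' => rw [map_add, finsuppInner_add_right, finsuppInner_add_right, hη, hη']
    | single j y => exact h i j x y

theorem add (h : IsFormalAdjoint S T) (h' : IsFormalAdjoint S' T') :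
    IsFormalAdjoint (S + S') (T + T') := fun ξ η => by
  rw [LinearMap.add_apply, LinearMap.add_apply, finsuppInner_add_left, finsuppInner_add_right,
    h, h']

theorem mul (h : IsFormalAdjoint S T) (h' : IsFormalAdjoint S' T') :
    IsFormalAdjoint (S * S') (T' * T) := fun ξ η => by
  rw [Module.End.mul_apply, Module.End.mul_apply, h, h']

theorem real_smul (h : IsFormalAdjoint S T) (r : ℝ) :
    IsFormalAdjoint ((r : ℂ) • S) ((r : ℂ) • T) := fun ξ η => by
  rw [LinearMap.smul_apply, LinearMap.smul_apply, finsuppInner_smul_left, finsuppInner_smul_right,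
    h, Complex.conj_ofReal]

end IsFormalAdjoint

theorem QOscillatorPair.isFormalAdjoint_oscillatorE {q s : ℝ}
    {z zd w wd k kinv : Module.End ℂ (ι →₀ H)}
    (h : QOscillatorPair (q : ℂ) z zd w wd k kinv) (hs : s ≠ 0) (hsq : s ^ 2 = q)
    (hz : IsFormalAdjoint z zd) (hwd : IsFormalAdjoint wd w) (hk : IsFormalAdjoint k k)
    (hkinv : IsFormalAdjoint kinv kinv) :
    IsFormalAdjoint (oscillatorE (q : ℂ) s z wd k kinv) (-oscillatorF (q : ℂ) s zd w k kinv) := by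
  have hq : (q : ℂ) ≠ 0 := by rw [← hsq]; exact_mod_cast pow_ne_zero 2 hs
  have hE := (((hk.mul hwd).real_smul s⁻¹).add ((hkinv.mul hz).real_smul s)).real_smul
    (-(q - q⁻¹)⁻¹)
  have w_k : w * k = (q : ℂ) • (k * w) := h.w_k hq
  have zd_kinv : zd * kinv = (q : ℂ)⁻¹ • (kinv * zd) := h.zd_kinv hq
  have q_eq : (q : ℂ) = (s : ℂ) ^ 2 := by exact_mod_cast hsq.symm
  have s_ne_zero : (s : ℂ) ≠ 0 := by exact_mod_cast hs
  have s_inv_mul_q : (s : ℂ)⁻¹ * q = s := by rw [q_eq]; field_simp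
  have s_mul_q_inv : (s : ℂ) * (q : ℂ)⁻¹ = (s : ℂ)⁻¹ := by rw [q_eq]; field_simp
  push_cast [w_k, zd_kinv, smul_smul, s_inv_mul_q, s_mul_q_inv] at hE
  rwa [oscillatorE, oscillatorF, ← neg_smul]

end FormalAdjoint

section WeightedShift

variable {ι H : Type*} [AddCommGroup ι] [NormedAddCommGroup H] [InnerProductSpace ℂ H]

/-- The operator-weighted shift `η_p ↦ (W_p η)_{p+d}` on finitely supported functions. -/
def weightedShift (d : ι) (W : ι → H →L[ℂ] H) : Module.End ℂ (ι →₀ H) :=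
  Finsupp.lsum ℂ fun p => (Finsupp.lsingle (p + d)).comp (W p : H →ₗ[ℂ] H)

variable {d e : ι} {W V : ι → H →L[ℂ] H}

theorem weightedShift_single (d : ι) (W : ι → H →L[ℂ] H) (p : ι) (x : H) :
    weightedShift d W (Finsupp.single p x) = Finsupp.single (p + d) (W p x) := by
  simp [weightedShift]

theorem weightedShift_mul (d e : ι) (W V : ι → H →L[ℂ] H) :
    weightedShift d W * weightedShift e V = weightedShift (d + e) fun p => W (p + e) * V p := by
  refine Finsupp.lhom_ext fun p x => ?_
  rw [Module.End.mul_apply, weightedShift_single, weightedShift_single, weightedShift_single,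
    add_assoc, add_comm e, mul_apply_eq_comp]

theorem weightedShift_sub (d : ι) (W V : ι → H →L[ℂ] H) :
    weightedShift d W - weightedShift d V = weightedShift d (W - V) := by
  refine Finsupp.lhom_ext fun p x => ?_
  simp [weightedShift_single]

theorem weightedShift_smul (c : ℂ) (d : ι) (W : ι → H →L[ℂ] H) :
    c • weightedShift d W = weightedShift d (c • W) := by
  refine Finsupp.lhom_ext fun p x => ?_
  simp [weightedShift_single]

theorem weightedShift_zero_one : weightedShift (0 : ι) (1 : ι → H →L[ℂ] H) = 1 := by
  refine Finsupp.lhom_ext fun p x => ?_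
  simp [weightedShift_single]

theorem qCommute_weightedShift {c : ℂ} (h : ∀ p, W (p + e) * V p = c • (V (p + d) * W p)) :
    QCommute c (weightedShift d W) (weightedShift e V) := by
  rw [QCommute, weightedShift_mul, weightedShift_mul, weightedShift_smul, add_comm e]
  exact congrArg _ (funext h)

theorem commute_weightedShift (hW : ∀ p, W (p + e) = W p) (hV : ∀ p, V (p + d) = V p)
    (hWV : ∀ p, Commute (W p) (V p)) : Commute (weightedShift d W) (weightedShift e V) := by
  have hcomm := qCommute_weightedShift (c := 1) (d := d) (e := e) (W := W) (V := V) fun p => by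
    rw [hW, hV, one_smul, (hWV p).eq]
  rwa [QCommute, one_smul] at hcomm

theorem isFormalAdjoint_weightedShift
    (h : ∀ p x y, inner ℂ (W p x) y = inner ℂ x (V (p + d) y)) :
    IsFormalAdjoint (weightedShift d W) (weightedShift (-d) V) := by
  refine .of_single fun p r x y => ?_
  simp only [weightedShift_single, finsuppInner_single, ← sub_eq_add_neg]
  by_cases hr : r = p + d
  · subst hr
    simp [h]
  · rw [if_neg hr, if_neg fun hp => hr (sub_eq_iff_eq_add.mp hp)]

/-- The diagonal operator `η_p ↦ q^{g(p)} (T η)_p` attached to an integer grading `g`. -/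
def gradingOp (q : ℝ) (T : H →L[ℂ] H) (g : ι →+ ℤ) : Module.End ℂ (ι →₀ H) :=
  weightedShift 0 fun p => (q : ℂ) ^ g p • T

theorem gradingOp_single (q : ℝ) (T : H →L[ℂ] H) (g : ι →+ ℤ) (p : ι) (x : H) :
    gradingOp q T g (Finsupp.single p x) = Finsupp.single p ((q : ℂ) ^ g p • T x) := by
  simp [gradingOp, weightedShift_single]

theorem gradingOp_mul_gradingOp_neg {q : ℝ} (hq : q ≠ 0) {S T : H →L[ℂ] H} (hST : S * T = 1)
    (g : ι →+ ℤ) : gradingOp q S g * gradingOp q T (-g) = 1 := by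
  have hqC : (q : ℂ) ≠ 0 := by exact_mod_cast hq
  rw [gradingOp, gradingOp, weightedShift_mul, ← weightedShift_zero_one, add_zero]
  congr 1 with p : 1
  simp [smul_smul, hST, inv_mul_cancel₀ (zpow_ne_zero (g p) hqC)]

theorem qCommute_gradingOp_weightedShift {q : ℝ} (hq : q ≠ 0) {T : H →L[ℂ] H} (g : ι →+ ℤ)
    (hTW : ∀ p, Commute T (W p)) :
    QCommute ((q : ℂ) ^ g d) (gradingOp q T g) (weightedShift d W) := by
  have hqC : (q : ℂ) ≠ 0 := by exact_mod_cast hq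
  refine qCommute_weightedShift fun p => ?_
  rw [map_add, zpow_add₀ hqC, smul_mul_assoc, add_zero, mul_smul_comm, smul_smul, (hTW p).eq,
    mul_comm]

end WeightedShift

section QOscillator

variable {ι H : Type*} [AddCommGroup ι] [NormedAddCommGroup H] [InnerProductSpace ℂ H]
  [CompleteSpace H]

theorem isFormalAdjoint_gradingOp (q : ℝ) {T : H →L[ℂ] H} (hT : IsSelfAdjoint T) (g : ι →+ ℤ) :
    IsFormalAdjoint (gradingOp q T g) (gradingOp q T g) := by
  have hadj := isFormalAdjoint_weightedShift (d := (0 : ι)) (W := fun p => (q : ℂ) ^ g p • T)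
    (V := fun p => (q : ℂ) ^ g p • T) fun p x y => by
      have inner_T : inner ℂ (T x) y = inner ℂ x (T y) :=
        ContinuousLinearMap.isSelfAdjoint_iff_isSymmetric.mp hT x y
      simp [inner_T, mul_comm]
  rwa [neg_zero] at hadj

theorem one_add_smul_mul_self_nonneg {T : H →L[ℂ] H} (hT : IsSelfAdjoint T) {r : ℝ} (hr : 0 ≤ r) :
    0 ≤ 1 + (r : ℂ) • (T * T) := by
  rw [Complex.coe_smul]
  exact add_nonneg zero_le_one (smul_nonneg hr hT.mul_self_nonneg)

theorem alpha_mul_self {q : ℝ} (hq : 0 ≤ q) {T : H →L[ℂ] H} (hT : IsSelfAdjoint T) (n : ℤ) :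
    alpha q T n * alpha q T n = 1 + (q : ℂ) ^ (2 * n) • (T * T) := by
  rw [alpha, CFC.sqrt_mul_sqrt_self _ (one_add_smul_mul_self_nonneg hT (zpow_nonneg hq _)),
    Complex.ofReal_zpow]

theorem alpha_commute {T S : H →L[ℂ] H} (h : Commute T S) (q : ℝ) (n : ℤ) :
    Commute (alpha q T n) S :=
  .cfcₙ_nnreal ((Commute.one_left S).add_left ((h.mul_left h).smul_left _)) _

theorem alpha_commute_alpha {T S : H →L[ℂ] H} (h : Commute T S) (q : ℝ) (m n : ℤ) :
    Commute (alpha q T m) (alpha q S n) :=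
  alpha_commute (alpha_commute h.symm q n).symm q m

theorem inner_alpha_left (q : ℝ) (T : H →L[ℂ] H) (n : ℤ) (x y : H) :
    inner ℂ (alpha q T n x) y = inner ℂ x (alpha q T n y) :=
  ContinuousLinearMap.isSelfAdjoint_iff_isSymmetric.mp (CFC.sqrt_nonneg _).isSelfAdjoint x y

/-- The raising operator `η_p ↦ (α_{c(p)+1}(T) η)_{p+d}`: it shifts by `d`, and its weight depends
on `p` only through the coordinate `c`. -/
def raisingOp (q : ℝ) (T : H →L[ℂ] H) (c : ι →+ ℤ) (d : ι) : Module.End ℂ (ι →₀ H) :=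
  weightedShift d fun p => alpha q T (c p + 1)

/-- The lowering operator `η_p ↦ (α_{c(p)}(T) η)_{p-d}`, the formal adjoint of `raisingOp` when
`c d = 1`. -/
def loweringOp (q : ℝ) (T : H →L[ℂ] H) (c : ι →+ ℤ) (d : ι) : Module.End ℂ (ι →₀ H) :=
  weightedShift (-d) fun p => alpha q T (c p)

variable {c : ι →+ ℤ} {d : ι}

theorem raisingOp_single (q : ℝ) (T : H →L[ℂ] H) (c : ι →+ ℤ) (d p : ι) (x : H) :
    raisingOp q T c d (Finsupp.single p x) = Finsupp.single (p + d) (alpha q T (c p + 1) x) :=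
  weightedShift_single d _ p x

theorem loweringOp_single (q : ℝ) (T : H →L[ℂ] H) (c : ι →+ ℤ) (d p : ι) (x : H) :
    loweringOp q T c d (Finsupp.single p x) = Finsupp.single (p - d) (alpha q T (c p) x) := by
  rw [loweringOp, weightedShift_single, sub_eq_add_neg]

theorem isFormalAdjoint_raisingOp (q : ℝ) (T : H →L[ℂ] H) (hcd : c d = 1) :
    IsFormalAdjoint (raisingOp q T c d) (loweringOp q T c d) :=
  isFormalAdjoint_weightedShift fun p x y => by rw [map_add, hcd, inner_alpha_left]

theorem isFormalAdjoint_loweringOp (q : ℝ) (T : H →L[ℂ] H) (hcd : c d = 1) :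
    IsFormalAdjoint (loweringOp q T c d) (raisingOp q T c d) := by
  have hadj := isFormalAdjoint_weightedShift (d := -d) (W := fun p => alpha q T (c p))
    (V := fun p => alpha q T (c p + 1)) fun p x y => by simp [hcd, inner_alpha_left]
  rwa [neg_neg] at hadj

theorem loweringOp_mul_raisingOp_sub {q : ℝ} (hq : 0 < q) {T : H →L[ℂ] H} (hT : IsSelfAdjoint T)
    (hcd : c d = 1) :
    loweringOp q T c d * raisingOp q T c d - (q : ℂ) ^ 2 • (raisingOp q T c d * loweringOp q T c d)
      = (1 - (q : ℂ) ^ 2) • 1 := by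
  have hqC : (q : ℂ) ≠ 0 := by exact_mod_cast hq.ne'
  rw [loweringOp, raisingOp, weightedShift_mul, weightedShift_mul, neg_add_cancel, add_neg_cancel,
    weightedShift_smul, weightedShift_sub, ← weightedShift_zero_one, weightedShift_smul]
  congr 1 with p : 1
  have q_zpow : (q : ℂ) ^ (2 * (c p + 1)) = (q : ℂ) ^ 2 * (q : ℂ) ^ (2 * c p) := by
    rw [mul_add, zpow_add₀ hqC, mul_comm]
    rfl
  simp only [Pi.sub_apply, Pi.smul_apply, Pi.one_apply, map_add, map_neg, hcd,
    neg_add_cancel_right, alpha_mul_self hq.le hT, q_zpow]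
  module

end QOscillator

section Representation

variable {K : Type*} [NormedAddCommGroup K] [InnerProductSpace ℂ K]

/-- The grading `(n, k) ↦ n - k` by powers of `q` in `K̂`. -/
def weightGrading : ℤ × ℤ →+ ℤ :=
  AddMonoidHom.fst ℤ ℤ - AddMonoidHom.snd ℤ ℤ

theorem KOp_eq_gradingOp (q : ℝ) (H₁ : K →L[ℂ] K) : KOp q H₁ = gradingOp q H₁ weightGrading := by
  refine Finsupp.lhom_ext fun p x => ?_
  simp [KOp, gradingOp_single, weightGrading]

theorem KinvOp_eq_gradingOp (q : ℝ) (H₁ : K →L[ℂ] K) [Invertible H₁] :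
    KinvOp q H₁ = gradingOp q (⅟H₁) (-weightGrading) := by
  refine Finsupp.lhom_ext fun p x => ?_
  simp [KinvOp, gradingOp_single, weightGrading]

variable [CompleteSpace K]

/-- The analogue `w η_{nk} = α_{k+1}(A₂) η_{n,k+1}` of `z` in the second index. -/
def wOp (q : ℝ) (A₂ : K →L[ℂ] K) : Module.End ℂ (ℤ × ℤ →₀ K) :=
  raisingOp q A₂ (AddMonoidHom.snd ℤ ℤ) (0, 1)

/-- The analogue `w† η_{nk} = α_k(A₂) η_{n,k-1}` of `z†` in the second index. -/
def wdOp (q : ℝ) (A₂ : K →L[ℂ] K) : Module.End ℂ (ℤ × ℤ →₀ K) :=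
  loweringOp q A₂ (AddMonoidHom.snd ℤ ℤ) (0, 1)

theorem zOp_eq_raisingOp (q : ℝ) (A₁ : K →L[ℂ] K) :
    zOp q A₁ = raisingOp q A₁ (AddMonoidHom.fst ℤ ℤ) (1, 0) := by
  refine Finsupp.lhom_ext fun p x => ?_
  simp [zOp, raisingOp_single, Prod.add_def]

theorem zdOp_eq_loweringOp (q : ℝ) (A₁ : K →L[ℂ] K) :
    zdOp q A₁ = loweringOp q A₁ (AddMonoidHom.fst ℤ ℤ) (1, 0) := by
  refine Finsupp.lhom_ext fun p x => ?_
  simp [zdOp, loweringOp_single, Prod.sub_def]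

variable {q : ℝ} {A₁ A₂ H₁ : K →L[ℂ] K} [Invertible H₁]

theorem qOscillatorPair_ops (hq : 0 < q) (hA₁ : IsSelfAdjoint A₁) (hA₂ : IsSelfAdjoint A₂)
    (h12 : Commute A₁ A₂) (h1H : Commute A₁ H₁) (h2H : Commute A₂ H₁) :
    QOscillatorPair (q : ℂ) (zOp q A₁) (zdOp q A₁) (wOp q A₂) (wdOp q A₂) (KOp q H₁)
      (KinvOp q H₁) := by
  rw [zOp_eq_raisingOp, zdOp_eq_loweringOp, wOp, wdOp, KOp_eq_gradingOp, KinvOp_eq_gradingOp]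
  have hα₁ := fun n => (alpha_commute h1H q n).symm
  have hα₂ := fun n => (alpha_commute h2H q n).symm
  have hα₁₂ := alpha_commute_alpha h12 q
  exact
  { zd_mul_z := loweringOp_mul_raisingOp_sub hq hA₁ rfl
    wd_mul_w := loweringOp_mul_raisingOp_sub hq hA₂ rfl
    z_w := commute_weightedShift (by simp) (by simp) fun _ => hα₁₂ _ _
    z_wd := commute_weightedShift (by simp) (by simp) fun _ => hα₁₂ _ _
    zd_w := commute_weightedShift (by simp) (by simp) fun _ => hα₁₂ _ _
    zd_wd := commute_weightedShift (by simp) (by simp) fun _ => hα₁₂ _ _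
    k_mul_kinv := gradingOp_mul_gradingOp_neg hq.ne' (mul_invOf_self H₁) _
    kinv_mul_k := by
      simpa using gradingOp_mul_gradingOp_neg hq.ne' (invOf_mul_self H₁) (-weightGrading)
    k_z := by
      simpa [weightGrading, raisingOp] using
        qCommute_gradingOp_weightedShift hq.ne' weightGrading (d := (1, 0)) fun p => hα₁ (p.1 + 1)
    k_zd := by
      simpa [weightGrading, loweringOp] using
        qCommute_gradingOp_weightedShift hq.ne' weightGrading (d := -(1, 0)) fun p => hα₁ p.1
    k_w := by
      simpa [weightGrading, raisingOp] using
        qCommute_gradingOp_weightedShift hq.ne' weightGrading (d := (0, 1)) fun p => hα₂ (p.2 + 1)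
    k_wd := by
      simpa [weightGrading, loweringOp] using
        qCommute_gradingOp_weightedShift hq.ne' weightGrading (d := -(0, 1)) fun p => hα₂ p.2 }

theorem ofReal_sqrt_zpow_two_mul (hq : 0 ≤ q) (n : ℤ) :
    (Real.sqrt q : ℂ) ^ (2 * n) = (q : ℂ) ^ n := by
  rw [zpow_mul]
  congr 1
  exact_mod_cast Real.sq_sqrt hq

theorem ofReal_sqrt_mul_zpow (hq : 0 < q) (n : ℤ) :
    (Real.sqrt q : ℂ) * (q : ℂ) ^ n = (Real.sqrt q : ℂ) ^ (2 * n + 1) := by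
  have hs : (Real.sqrt q : ℂ) ≠ 0 := by exact_mod_cast (Real.sqrt_pos.mpr hq).ne'
  rw [zpow_add_one₀ hs, ofReal_sqrt_zpow_two_mul hq.le, mul_comm]

theorem ofReal_sqrt_inv_mul_zpow (hq : 0 < q) (n : ℤ) :
    (Real.sqrt q : ℂ)⁻¹ * (q : ℂ) ^ n = (Real.sqrt q : ℂ) ^ (2 * n - 1) := by
  have hs : (Real.sqrt q : ℂ) ≠ 0 := by exact_mod_cast (Real.sqrt_pos.mpr hq).ne'
  rw [zpow_sub_one₀ hs, ofReal_sqrt_zpow_two_mul hq.le, mul_comm]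

theorem EOp_eq_oscillatorE (hq : 0 < q) :
    EOp q A₁ A₂ H₁ =
      oscillatorE (q : ℂ) (Real.sqrt q : ℂ) (zOp q A₁) (wdOp q A₂) (KOp q H₁) (KinvOp q H₁) := by
  refine Finsupp.lhom_ext fun ⟨n, k⟩ x => ?_
  have hKwd : (Real.sqrt q : ℂ)⁻¹ * (q : ℂ) ^ (n - (k - 1)) =
      (Real.sqrt q : ℂ) ^ (2 * (n - k) + 1) := by
    rw [ofReal_sqrt_inv_mul_zpow hq]
    ring_nf
  have hKinvz : (Real.sqrt q : ℂ) * (q : ℂ) ^ (-(n + 1 - k)) =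
      (Real.sqrt q : ℂ) ^ (-(2 * (n - k)) - 1) := by
    rw [ofReal_sqrt_mul_zpow hq]
    ring_nf
  simp [EOp, oscillatorE, zOp, wdOp, KOp, KinvOp, loweringOp_single, smul_smul,
    -zpow_neg, -neg_sub, -Complex.coe_smul, mul_assoc, hKwd, hKinvz,
    sub_eq_add_neg (G := ℤ × ℤ →₀ K)]

theorem FOp_eq_oscillatorF (hq : 0 < q) :
    FOp q A₁ A₂ H₁ =
      oscillatorF (q : ℂ) (Real.sqrt q : ℂ) (zdOp q A₁) (wOp q A₂) (KOp q H₁) (KinvOp q H₁) := by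
  refine Finsupp.lhom_ext fun ⟨n, k⟩ x => ?_
  have hKw : (Real.sqrt q : ℂ) * (q : ℂ) ^ (n - (k + 1)) =
      (Real.sqrt q : ℂ) ^ (2 * (n - k) - 1) := by
    rw [ofReal_sqrt_mul_zpow hq]
    ring_nf
  have hKinvzd : (Real.sqrt q : ℂ)⁻¹ * (q : ℂ) ^ (-(n - 1 - k)) =
      (Real.sqrt q : ℂ) ^ (1 - 2 * (n - k)) := by
    rw [ofReal_sqrt_inv_mul_zpow hq]
    ring_nf
  simp [FOp, oscillatorF, zdOp, wOp, KOp, KinvOp, raisingOp_single, smul_smul,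
    -zpow_neg, -neg_sub, -Complex.coe_smul, mul_assoc, hKw, hKinvzd]

end Representation

end Stmt17

open Stmt17 in
theorem stmt_17_general {K : Type*} [NormedAddCommGroup K] [InnerProductSpace ℂ K]
    [CompleteSpace K] {q : ℝ} (hq0 : 0 < q) (hq1 : q ≠ 1)
    {A₁ A₂ H₁ : K →L[ℂ] K} [Invertible H₁]
    (hA₁ : IsSelfAdjoint A₁) (hA₂ : IsSelfAdjoint A₂) (hH₁ : IsSelfAdjoint H₁)
    (h12 : Commute A₁ A₂) (h1H : Commute A₁ H₁) (h2H : Commute A₂ H₁) :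
    IsFormalAdjoint (zOp q A₁) (zdOp q A₁) ∧
    IsFormalAdjoint (EOp q A₁ A₂ H₁) (-FOp q A₁ A₂ H₁) ∧
    IsFormalAdjoint (KOp q H₁) (KOp q H₁) ∧
    CrossProductRelations (q : ℂ) (Real.sqrt q : ℂ) (zOp q A₁) (zdOp q A₁) (EOp q A₁ A₂ H₁)
      (FOp q A₁ A₂ H₁) (KOp q H₁) (KinvOp q H₁) := by
  have hpair := qOscillatorPair_ops hq0 hA₁ hA₂ h12 h1H h2H
  have hs : Real.sqrt q ≠ 0 := (Real.sqrt_pos.mpr hq0).ne'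
  have hq2 : (q : ℂ) ^ 2 ≠ 1 := by
    exact_mod_cast (pow_eq_one_iff_of_nonneg hq0.le two_ne_zero).not.mpr hq1
  have hz : IsFormalAdjoint (zOp q A₁) (zdOp q A₁) := by
    rw [zOp_eq_raisingOp, zdOp_eq_loweringOp]
    exact isFormalAdjoint_raisingOp q A₁ rfl
  have hK : IsFormalAdjoint (KOp q H₁) (KOp q H₁) := by
    rw [KOp_eq_gradingOp]
    exact isFormalAdjoint_gradingOp q hH₁ _
  have hKinv : IsFormalAdjoint (KinvOp q H₁) (KinvOp q H₁) := by
    rw [KinvOp_eq_gradingOp]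
    exact isFormalAdjoint_gradingOp q ((IsSelfAdjoint.invOf_iff H₁).mpr hH₁) _
  rw [EOp_eq_oscillatorE hq0, FOp_eq_oscillatorF hq0]
  refine ⟨hz, ?_, hK, hpair.crossProductRelations (by exact_mod_cast hq0.ne') hq2
    (by exact_mod_cast hs)⟩
  exact hpair.isFormalAdjoint_oscillatorE hs (Real.sq_sqrt hq0.le) hz
    (isFormalAdjoint_loweringOp q A₂ rfl) hK hKinv

open Stmt17 in
/-- With `0 < q < 1`, `λ = q - q⁻¹`, and `A₁, A₂, H₁` pairwise commuting
bounded self-adjoint operators on a Hilbert space `K` with `H₁` invertible, the operators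
`z, z†, E, F, K̂, K̂⁻¹` defined above on the space of finitely supported functions
`ℤ² →₀ K` form a ∗-representation of the cross product ∗-algebra
`U_q(su_{1,1}) ⋉ O(U_q)`. -/
theorem stmt_17 {K : Type*} [NormedAddCommGroup K] [InnerProductSpace ℂ K]
    [CompleteSpace K]
    (q : ℝ) (hq0 : 0 < q) (hq1 : q < 1)
    (A₁ A₂ H₁ : K →L[ℂ] K) [Invertible H₁]
    (hA₁ : IsSelfAdjoint A₁) (hA₂ : IsSelfAdjoint A₂) (hH₁ : IsSelfAdjoint H₁)
    (h12 : A₁ * A₂ = A₂ * A₁) (h1H : A₁ * H₁ = H₁ * A₁) (h2H : A₂ * H₁ = H₁ * A₂) :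
    (∀ ξ η : ℤ × ℤ →₀ K,
      finsuppInner (zOp q A₁ ξ) η = finsuppInner ξ (zdOp q A₁ η)) ∧
    (∀ ξ η : ℤ × ℤ →₀ K,
      finsuppInner (EOp q A₁ A₂ H₁ ξ) η = -finsuppInner ξ (FOp q A₁ A₂ H₁ η)) ∧
    (∀ ξ η : ℤ × ℤ →₀ K,
      finsuppInner (KOp q H₁ ξ) η = finsuppInner ξ (KOp q H₁ η)) ∧
    zdOp q A₁ * zOp q A₁ - (q : ℂ) ^ 2 • (zOp q A₁ * zdOp q A₁)
      = (1 - (q : ℂ) ^ 2) • 1 ∧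
    KOp q H₁ * KinvOp q H₁ = 1 ∧ KinvOp q H₁ * KOp q H₁ = 1 ∧
    KOp q H₁ * EOp q A₁ A₂ H₁ = (q : ℂ) • (EOp q A₁ A₂ H₁ * KOp q H₁) ∧
    KOp q H₁ * FOp q A₁ A₂ H₁ = (q : ℂ)⁻¹ • (FOp q A₁ A₂ H₁ * KOp q H₁) ∧
    EOp q A₁ A₂ H₁ * FOp q A₁ A₂ H₁ - FOp q A₁ A₂ H₁ * EOp q A₁ A₂ H₁
      = ((q : ℂ) - (q : ℂ)⁻¹)⁻¹ •
        (KOp q H₁ * KOp q H₁ - KinvOp q H₁ * KinvOp q H₁) ∧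
    zOp q A₁ * KOp q H₁ = (q : ℂ)⁻¹ • (KOp q H₁ * zOp q A₁) ∧
    zOp q A₁ * EOp q A₁ A₂ H₁
      = (q : ℂ)⁻¹ • (EOp q A₁ A₂ H₁ * zOp q A₁)
        - (Real.sqrt q : ℂ) • (KinvOp q H₁ * (zOp q A₁ * zOp q A₁)) ∧
    zOp q A₁ * FOp q A₁ A₂ H₁
      = (q : ℂ)⁻¹ • (FOp q A₁ A₂ H₁ * zOp q A₁)
        + (Real.sqrt q : ℂ)⁻¹ • KinvOp q H₁ ∧
    zdOp q A₁ * KOp q H₁ = (q : ℂ) • (KOp q H₁ * zdOp q A₁) ∧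
    zdOp q A₁ * EOp q A₁ A₂ H₁
      = (q : ℂ) • (EOp q A₁ A₂ H₁ * zdOp q A₁) + (Real.sqrt q : ℂ) • KinvOp q H₁ ∧
    zdOp q A₁ * FOp q A₁ A₂ H₁
      = (q : ℂ) • (FOp q A₁ A₂ H₁ * zdOp q A₁)
        - (Real.sqrt q : ℂ)⁻¹ • (KinvOp q H₁ * (zdOp q A₁ * zdOp q A₁)) := by
  obtain ⟨hz, hE, hK, hrel⟩ := stmt_17_general hq0 hq1.ne hA₁ hA₂ hH₁ h12 h1H h2H
  exact ⟨hz, fun ξ η => (hE ξ η).trans (finsuppInner_neg_right ξ _), hK, hrel.zd_mul_z,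
    hrel.k_mul_kinv, hrel.kinv_mul_k, hrel.k_mul_e, hrel.k_mul_f, hrel.e_mul_f_sub, hrel.z_mul_k,
    hrel.z_mul_e, hrel.z_mul_f, hrel.zd_mul_k, hrel.zd_mul_e, hrel.zd_mul_f⟩

end
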